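/- Let ⊢ be an entailment relation on a set S and let Φ be a collection of finite subsets of S each of which is inconsistent (i.e. Φ(X) implies X ⊢ ∅). Then the following are equivalent: (1) Φ contains every inconsistent finite subset of S, i.e. X ⊢ ∅ implies Φ(X); (2) for all finite subsets {x₁,…,x_k}, {y₁,…,y_ℓ} and Z of S, if {x₁,…,x_k} ⊢ {y₁,…,y_ℓ} and Φ({y_j} ∪ Z) holds for every j = 1,…,ℓ, then Φ({x₁,…,x_k} ∪ Z) holds. -/

import Mathlib

/-- An entailment relation on a set `S`: a relation between finite subsets of `S`
satisfying reflexivity (R), monotonicity (M) and transitivity/cut (T). -/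
def IsEntailment {S : Type*} [DecidableEq S] (E : Finset S → Finset S → Prop) : Prop :=
  (∀ X Y : Finset S, (∃ x, x ∈ X ∧ x ∈ Y) → E X Y) ∧
  (∀ X X' Y Y' : Finset S, E X Y → E (X ∪ X') (Y ∪ Y')) ∧
  (∀ X Y : Finset S, ∀ z : S, E X (insert z Y) → E (insert z X) Y → E X Y)

theorem stmt0 {S : Type*} [DecidableEq S] (E : Finset S → Finset S → Prop)
    (hE : IsEntailment E) (Φ : Finset S → Prop)
    (hΦ : ∀ X : Finset S, Φ X → E X ∅) :
    (∀ X : Finset S, E X ∅ → Φ X) ↔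
      (∀ X Y Z : Finset S, E X Y → (∀ y ∈ Y, Φ (insert y Z)) → Φ (X ∪ Z)) := by
  obtain ⟨_, hM, hT⟩ := hE
  constructor
  · intro h X Y Z hXY hY
    apply h
    have key : ∀ Y : Finset S, (∀ y ∈ Y, Φ (insert y Z)) → E (X ∪ Z) Y → E (X ∪ Z) ∅ := by
      intro Y
      induction Y using Finset.induction_on with
      | empty => intro _ h; exact h
      | insert a Y' ha ih =>
        intro hY h
        apply ih (fun y hy => hY y (Finset.mem_insert_of_mem hy))
        apply hT _ _ a h
        have h1 := hM _ X _ Y' (hΦ _ (hY a (Finset.mem_insert_self a Y')))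
        have e : insert a Z ∪ X = insert a (X ∪ Z) := by
          rw [Finset.insert_union, Finset.union_comm]
        rwa [e, Finset.empty_union] at h1
    apply key Y hY
    have h1 := hM _ Z _ ∅ hXY
    rwa [Finset.union_empty] at h1
  · intro h X hX
    have h1 := h X ∅ ∅ hX (by simp)
    rwa [Finset.union_empty] at h1
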